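/- arXiv:1802.05897 — 3 statements merged into one kernel-verified Lean document; each statement's English description precedes it below -/
import Mathlib

section
/- (Catalan's like identity) Let n be a nonnegative integer and r an even nonnegative integer with r ≤ n. If n is even, then W_{n-r}·W_{n+r} − W_n² = (A·B·(α^r − β^r)/(αβ)^{r+1})·(α*·β*·β^r − β*·α*·α^r); if n is odd, then W_{n-r}·W_{n+r} − W_n² = (A·B·(α^r − β^r)/(αβ)^{r})·(α**·β**·β^r − β**·α**·α^r). -/
noncomputable def w (a b w0 w1 : ℝ) : ℕ → ℝ
  | 0 => w0
  | 1 => w1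
  | n + 2 => (if Even (n + 2) then a else b) * w a b w0 w1 (n + 1) + w a b w0 w1 n

/-- The standard basis `e_0 = 1, e_1 = i, e_2 = j, e_3 = k` of the real quaternions. -/
noncomputable def e : ℕ → Quaternion ℝ
  | 0 => 1
  | 1 => ⟨0, 1, 0, 0⟩
  | 2 => ⟨0, 0, 1, 0⟩
  | _ => ⟨0, 0, 0, 1⟩

/-- The generalized bi-periodic Fibonacci quaternion `W_n = ∑_{l=0}^{3} w_{n+l} e_l`. -/
noncomputable def W (a b w0 w1 : ℝ) (n : ℕ) : Quaternion ℝ :=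
  ∑ l ∈ Finset.range 4, w a b w0 w1 (n + l) • e l

/-- `qstar a b x = ∑_{l=0}^{3} (a^{ζ(l+1)}/(ab)^{⌊l/2⌋}) x^l e_l`; applied to `α`, `β`
it gives the quaternions `α*`, `β*`. -/
noncomputable def qstar (a b x : ℝ) : Quaternion ℝ :=
  ∑ l ∈ Finset.range 4, (a ^ ((l + 1) % 2) / (a * b) ^ (l / 2) * x ^ l) • e l

/-- `qstarstar a b x = ∑_{l=0}^{3} (a^{ζ(l)}/(ab)^{⌊(l+1)/2⌋}) x^l e_l`; applied to `α`, `β`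
it gives the quaternions `α**`, `β**`. -/
noncomputable def qstarstar (a b x : ℝ) : Quaternion ℝ :=
  ∑ l ∈ Finset.range 4, (a ^ (l % 2) / (a * b) ^ ((l + 1) / 2) * x ^ l) • e l

/-!
For a root `x` of `x² = ab(x + 1)`, the sequence `a^ζ(n+1) / (ab)^⌊n/2⌋ * xⁿ` solves the
alternating recurrence, so `w` is a combination of the two sequences attached to `α` and `β`.
Shifting such a sequence by `2m` multiplies it by `(x² / (ab))^m`; hence `W (2m)` and `W (2m + 1)`
both have the form `p^m • X - q^m • Y` with `p = α² / (ab)`, `q = β² / (ab)` and fixed quaternions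
`X`, `Y`. In the Catalan expression of such a sequence the squares `X²` and `Y²` cancel, and
`αβ = -ab` gives `pq = 1`.
-/

/-- `α` and `β` are the two distinct roots of the characteristic polynomial `x² - abx - ab` of the
bi-periodic recurrence, encoded by Vieta's formulas. Distinctness forces `ab ≠ 0`. -/
structure IsCharRootPair {K : Type*} [Field K] (a b α β : K) : Prop where
  add_eq : α + β = a * b
  mul_eq : α * β = -(a * b)
  ne : α ≠ β

/-- The analogue of the geometric sequence `xⁿ` for the bi-periodic recurrence, i.e. the factor
`a^ζ(n+1) / (ab)^⌊n/2⌋ * xⁿ` that appears in Binet's formula. -/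
def binetTerm {K : Type*} [Field K] (a b x : K) (n : ℕ) : K :=
  a ^ ((n + 1) % 2) / (a * b) ^ (n / 2) * x ^ n

namespace IsCharRootPair

variable {K : Type*} [Field K] {a b α β : K}

protected theorem symm (h : IsCharRootPair a b α β) : IsCharRootPair a b β α where
  add_eq := by rw [add_comm, h.add_eq]
  mul_eq := by rw [mul_comm, h.mul_eq]
  ne := h.ne.symm

theorem sq_eq (h : IsCharRootPair a b α β) : α ^ 2 = a * b * (α + 1) := by
  linear_combination α * h.add_eq - h.mul_eq

theorem left_ne_zero (h : IsCharRootPair a b α β) : α ≠ 0 := by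
  rintro rfl
  have hβ : β = 0 := by linear_combination h.add_eq + h.mul_eq
  exact h.ne hβ.symm

protected theorem mul_ne_zero (h : IsCharRootPair a b α β) : a * b ≠ 0 := by
  rw [← neg_ne_zero, ← h.mul_eq]
  exact mul_ne_zero h.left_ne_zero h.symm.left_ne_zero

theorem sq_div_mul_sq_div_eq_one (h : IsCharRootPair a b α β) :
    α ^ 2 / (a * b) * (β ^ 2 / (a * b)) = 1 := by
  have hab := h.mul_ne_zero
  rw [div_mul_div_comm, ← mul_pow, h.mul_eq, neg_sq, sq, div_self (mul_ne_zero hab hab)]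

end IsCharRootPair

theorem isCharRootPair_sqrt {a b : ℝ} (hD : 0 < a ^ 2 * b ^ 2 + 4 * (a * b)) :
    IsCharRootPair a b ((a * b + √(a ^ 2 * b ^ 2 + 4 * (a * b))) / 2)
      ((a * b - √(a ^ 2 * b ^ 2 + 4 * (a * b))) / 2) where
  add_eq := by ring
  mul_eq := by linear_combination (-1 / 4) * Real.sq_sqrt hD.le
  ne := by linarith [Real.sqrt_pos.mpr hD]

section BinetTerm

variable {K : Type*} [Field K]

theorem binetTerm_two_mul_add (a b x : K) (m l : ℕ) :
    binetTerm a b x (2 * m + l) = (x ^ 2 / (a * b)) ^ m * binetTerm a b x l := by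
  have hmod : (2 * m + l + 1) % 2 = (l + 1) % 2 := by lia
  have hdiv : (2 * m + l) / 2 = m + l / 2 := by lia
  rw [binetTerm, binetTerm, hmod, hdiv]
  ring

theorem binetTerm_two_mul_add_one_add (a b x : K) (m l : ℕ) :
    binetTerm a b x (2 * m + 1 + l) =
      (x ^ 2 / (a * b)) ^ m * x * (a ^ (l % 2) / (a * b) ^ ((l + 1) / 2) * x ^ l) := by
  have hmod : (1 + l + 1) % 2 = l % 2 := by lia
  rw [add_assoc, binetTerm_two_mul_add, binetTerm, hmod, add_comm 1 l]
  ring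

theorem binetTerm_add_two {a b x : K} (hab : a * b ≠ 0) (hx : x ^ 2 = a * b * (x + 1)) (n : ℕ) :
    binetTerm a b x (n + 2) =
      (if Even (n + 2) then a else b) * binetTerm a b x (n + 1) + binetTerm a b x n := by
  have ha : a ≠ 0 := left_ne_zero_of_mul hab
  have hb : b ≠ 0 := right_ne_zero_of_mul hab
  obtain ⟨m, rfl | rfl⟩ := n.even_or_odd'
  · have hstep : binetTerm a b x 2 = a * binetTerm a b x 1 + binetTerm a b x 0 := by
      simp only [binetTerm, Nat.reduceAdd, Nat.reduceMod, Nat.reduceDiv]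
      field_simp
      linear_combination hx
    rw [if_pos (by simp [parity_simps]), ← add_zero (2 * m)]
    simp only [add_assoc, binetTerm_two_mul_add, zero_add, hstep]
    ring
  · have hstep : binetTerm a b x 3 = b * binetTerm a b x 2 + binetTerm a b x 1 := by
      simp only [binetTerm, Nat.reduceAdd, Nat.reduceMod, Nat.reduceDiv]
      field_simp
      linear_combination x * hx
    rw [if_neg (by simp [parity_simps])]
    simp only [add_assoc, binetTerm_two_mul_add, Nat.reduceAdd, hstep]
    ring

end BinetTerm

theorem w_eq_add_binetTerm {a b x y : ℝ} (hab : a * b ≠ 0) (hx : x ^ 2 = a * b * (x + 1))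
    (hy : y ^ 2 = a * b * (y + 1)) (c d : ℝ) (n : ℕ) :
    w a b (a * (c + d)) (c * x + d * y) n = c * binetTerm a b x n + d * binetTerm a b y n := by
  induction n using Nat.twoStepInduction with
  | zero => simp [w, binetTerm, mul_add, mul_comm]
  | one => simp [w, binetTerm]
  | more n ih₀ ih₁ =>
    rw [w, ih₀, ih₁, binetTerm_add_two hab hx, binetTerm_add_two hab hy]
    ring

theorem sum_binetTerm_two_mul_add (a b x : ℝ) (m : ℕ) :
    ∑ l ∈ Finset.range 4, binetTerm a b x (2 * m + l) • e l =
      (x ^ 2 / (a * b)) ^ m • qstar a b x := by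
  simp only [binetTerm_two_mul_add, mul_smul, ← Finset.smul_sum]
  rfl

theorem sum_binetTerm_two_mul_add_one_add (a b x : ℝ) (m : ℕ) :
    ∑ l ∈ Finset.range 4, binetTerm a b x (2 * m + 1 + l) • e l =
      (x ^ 2 / (a * b)) ^ m • x • qstarstar a b x := by
  simp only [binetTerm_two_mul_add_one_add, mul_smul, ← Finset.smul_sum, qstarstar]

theorem catalan_smul_sub_smul {R S : Type*} [CommRing R] [Ring S] [Algebra R S] (p q : R)
    (X Y : S) (t s : ℕ) :
    (p ^ t • X - q ^ t • Y) * (p ^ (t + 2 * s) • X - q ^ (t + 2 * s) • Y) -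
        (p ^ (t + s) • X - q ^ (t + s) • Y) ^ 2 =
      ((p * q) ^ t * (p ^ s - q ^ s)) • (q ^ s • (X * Y) - p ^ s • (Y * X)) := by
  simp only [sq, sub_mul, mul_sub, smul_mul_smul_comm]
  module

theorem IsCharRootPair.catalan {K S : Type*} [Field K] [Ring S] [Algebra K S] {a b α β : K}
    (h : IsCharRootPair a b α β) {V : ℕ → S} {X Y : S}
    (hV : ∀ m, V m = (α ^ 2 / (a * b)) ^ m • X - (β ^ 2 / (a * b)) ^ m • Y) (t s : ℕ) :
    V t * V (t + 2 * s) - V (t + s) ^ 2 =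
      ((α ^ (2 * s) - β ^ (2 * s)) / (α * β) ^ (2 * s)) •
        (β ^ (2 * s) • (X * Y) - α ^ (2 * s) • (Y * X)) := by
  have hpow (x : K) : (x ^ 2 / (a * b)) ^ s = x ^ (2 * s) / (a * b) ^ s := by
    rw [div_pow, pow_mul]
  have hden : (α * β) ^ (2 * s) = (a * b) ^ s * (a * b) ^ s := by
    rw [h.mul_eq, (even_two_mul s).neg_pow, two_mul, pow_add]
  rw [hV, hV, hV, catalan_smul_sub_smul, h.sq_div_mul_sq_div_eq_one, one_pow, one_mul, hpow, hpow,
    hden]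
  module

section Binet

variable {a b w0 w1 α β A B : ℝ}

theorem w_eq_binet (h : IsCharRootPair a b α β) (hA : A = (α * w1 + b * w0) / (α - β))
    (hB : B = (β * w1 + b * w0) / (α - β)) (n : ℕ) :
    w a b w0 w1 n = A / α * binetTerm a b α n - B / β * binetTerm a b β n := by
  have hα := h.left_ne_zero
  have hβ := h.symm.left_ne_zero
  have hsub := sub_ne_zero.mpr h.ne
  have hw0 : w0 = a * (A / α + -(B / β)) := by
    rw [hA, hB]
    field_simp
    linear_combination w0 * (α - β) * h.mul_eq
  have hw1 : w1 = A / α * α + -(B / β) * β := by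
    rw [hA, hB]
    field_simp
    ring
  rw [hw0, hw1, w_eq_add_binetTerm h.mul_ne_zero h.sq_eq h.symm.sq_eq]
  ring

theorem W_eq_binet (h : IsCharRootPair a b α β) (hA : A = (α * w1 + b * w0) / (α - β))
    (hB : B = (β * w1 + b * w0) / (α - β)) (n : ℕ) :
    W a b w0 w1 n =
      (A / α) • ∑ l ∈ Finset.range 4, binetTerm a b α (n + l) • e l -
        (B / β) • ∑ l ∈ Finset.range 4, binetTerm a b β (n + l) • e l := by
  simp only [W, w_eq_binet h hA hB, sub_smul, mul_smul, Finset.sum_sub_distrib, Finset.smul_sum]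

theorem W_two_mul (h : IsCharRootPair a b α β) (hA : A = (α * w1 + b * w0) / (α - β))
    (hB : B = (β * w1 + b * w0) / (α - β)) (m : ℕ) :
    W a b w0 w1 (2 * m) =
      (α ^ 2 / (a * b)) ^ m • (A / α) • qstar a b α -
        (β ^ 2 / (a * b)) ^ m • (B / β) • qstar a b β := by
  rw [W_eq_binet h hA hB, sum_binetTerm_two_mul_add, sum_binetTerm_two_mul_add,
    smul_comm (A / α), smul_comm (B / β)]

theorem W_two_mul_add_one (h : IsCharRootPair a b α β)
    (hA : A = (α * w1 + b * w0) / (α - β)) (hB : B = (β * w1 + b * w0) / (α - β)) (m : ℕ) :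
    W a b w0 w1 (2 * m + 1) =
      (α ^ 2 / (a * b)) ^ m • A • qstarstar a b α -
        (β ^ 2 / (a * b)) ^ m • B • qstarstar a b β := by
  rw [W_eq_binet h hA hB, sum_binetTerm_two_mul_add_one_add, sum_binetTerm_two_mul_add_one_add,
    smul_comm (A / α), smul_comm (B / β), smul_smul (A / α), smul_smul (B / β),
    div_mul_cancel₀ A h.left_ne_zero, div_mul_cancel₀ B h.symm.left_ne_zero]

theorem W_catalan_two_mul (h : IsCharRootPair a b α β)
    (hA : A = (α * w1 + b * w0) / (α - β)) (hB : B = (β * w1 + b * w0) / (α - β)) (t s : ℕ) :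
    W a b w0 w1 (2 * t) * W a b w0 w1 (2 * (t + 2 * s)) - W a b w0 w1 (2 * (t + s)) ^ 2 =
      (A * B * (α ^ (2 * s) - β ^ (2 * s)) / (α * β) ^ (2 * s + 1)) •
        (β ^ (2 * s) • (qstar a b α * qstar a b β) -
          α ^ (2 * s) • (qstar a b β * qstar a b α)) := by
  rw [h.catalan (V := fun m => W a b w0 w1 (2 * m)) (W_two_mul h hA hB)]
  simp only [smul_mul_smul_comm]
  module

theorem W_catalan_two_mul_add_one (h : IsCharRootPair a b α β)
    (hA : A = (α * w1 + b * w0) / (α - β)) (hB : B = (β * w1 + b * w0) / (α - β)) (t s : ℕ) :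
    W a b w0 w1 (2 * t + 1) * W a b w0 w1 (2 * (t + 2 * s) + 1) -
        W a b w0 w1 (2 * (t + s) + 1) ^ 2 =
      (A * B * (α ^ (2 * s) - β ^ (2 * s)) / (α * β) ^ (2 * s)) •
        (β ^ (2 * s) • (qstarstar a b α * qstarstar a b β) -
          α ^ (2 * s) • (qstarstar a b β * qstarstar a b α)) := by
  rw [h.catalan (V := fun m => W a b w0 w1 (2 * m + 1)) (W_two_mul_add_one h hA hB)]
  simp only [smul_mul_smul_comm]
  module

end Binet

/-- Catalan's like identity for the generalized bi-periodic Fibonacci quaternions. -/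
theorem stmt5 (a b w0 w1 α β A B : ℝ)
    (ha : a ≠ 0) (hb : b ≠ 0) (hD : a ^ 2 * b ^ 2 + 4 * (a * b) > 0)
    (hα : α = (a * b + Real.sqrt (a ^ 2 * b ^ 2 + 4 * (a * b))) / 2)
    (hβ : β = (a * b - Real.sqrt (a ^ 2 * b ^ 2 + 4 * (a * b))) / 2)
    (hA : A = (α * w1 + b * w0) / (α - β))
    (hB : B = (β * w1 + b * w0) / (α - β))
    (n r : ℕ) (hr : Even r) (hrn : r ≤ n) :
    W a b w0 w1 (n - r) * W a b w0 w1 (n + r) - W a b w0 w1 n ^ 2 =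
      if Even n then
        (A * B * (α ^ r - β ^ r) / (α * β) ^ (r + 1)) •
          (β ^ r • (qstar a b α * qstar a b β) - α ^ r • (qstar a b β * qstar a b α))
      else
        (A * B * (α ^ r - β ^ r) / (α * β) ^ r) •
          (β ^ r • (qstarstar a b α * qstarstar a b β) -
            α ^ r • (qstarstar a b β * qstarstar a b α)) := by
  have h : IsCharRootPair a b α β := by
    rw [hα, hβ]
    exact isCharRootPair_sqrt hD
  obtain ⟨s, rfl⟩ := hr.two_dvd
  split_ifs with hn
  · obtain ⟨m, rfl⟩ := hn.two_dvd
    obtain ⟨t, rfl⟩ : ∃ t, m = t + s := ⟨m - s, by lia⟩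
    have hlow : 2 * (t + s) - 2 * s = 2 * t := by lia
    have hhigh : 2 * (t + s) + 2 * s = 2 * (t + 2 * s) := by ring
    rw [hlow, hhigh, W_catalan_two_mul h hA hB]
  · obtain ⟨m, rfl⟩ := Nat.not_even_iff_odd.mp hn
    obtain ⟨t, rfl⟩ : ∃ t, m = t + s := ⟨m - s, by lia⟩
    have hlow : 2 * (t + s) + 1 - 2 * s = 2 * t + 1 := by lia
    have hhigh : 2 * (t + s) + 1 + 2 * s = 2 * (t + 2 * s) + 1 := by ring
    rw [hlow, hhigh, W_catalan_two_mul_add_one h hA hB]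
end

section
/- For every integer n ≥ 1, the 2×2 matrix over the real quaternions with rows (W_{2n}, W_{2(n-1)}) and (W_{2(n+1)}, W_{2n}) equals the product of the matrix with rows (W_2, W_0) and (W_4, W_2) with the (n−1)-st power of the matrix with rows (ab+2, 1) and (−1, 0) (the latter entries regarded as real quaternions). -/
/-!
Eliminating the odd-indexed terms from three consecutive instances of the defining recurrence leaves
`w (n + 4) = (a * b + 2) * w (n + 2) - w n`, whatever the parity of `n`. The quaternion `W n` is a
fixed linear combination of shifts of `w`, so `W` inherits this recurrence, and the even-indexed
quaternions form a second-order sequence whose step is right multiplication by a companion matrix.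
-/

theorem matrix_fin_two_eq_mul_companion_pow {R : Type*} [Semiring R] {p q : R} {u v : ℕ → R}
    (hu : ∀ n, u (n + 2) = u (n + 1) * p + u n * q)
    (hv : ∀ n, v (n + 2) = v (n + 1) * p + v n * q) (n : ℕ) :
    !![u (n + 1), u n; v (n + 1), v n] = !![u 1, u 0; v 1, v 0] * !![p, 1; q, 0] ^ n := by
  induction n with
  | zero => rw [pow_zero, mul_one]
  | succ n ih =>
    rw [pow_succ, ← mul_assoc, ← ih, Matrix.mul_fin_two, hu, hv]
    simp only [mul_one, mul_zero, add_zero]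

section BiperiodicFibonacci

variable (a b w0 w1 : ℝ)

theorem w_add_two_of_even {n : ℕ} (hn : Even n) :
    w a b w0 w1 (n + 2) = a * w a b w0 w1 (n + 1) + w a b w0 w1 n := by
  rw [w, if_pos (hn.add even_two)]

theorem w_add_two_of_odd {n : ℕ} (hn : Odd n) :
    w a b w0 w1 (n + 2) = b * w a b w0 w1 (n + 1) + w a b w0 w1 n := by
  rw [w, if_neg (Nat.not_even_iff_odd.mpr (hn.add_even even_two))]

theorem w_add_four (n : ℕ) :
    w a b w0 w1 (n + 4) = (a * b + 2) * w a b w0 w1 (n + 2) - w a b w0 w1 n := by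
  rcases n.even_or_odd with hn | hn
  · linear_combination w_add_two_of_even a b w0 w1 (hn.add even_two) +
      a * w_add_two_of_odd a b w0 w1 hn.add_one - w_add_two_of_even a b w0 w1 hn
  · linear_combination w_add_two_of_odd a b w0 w1 (hn.add_even even_two) +
      b * w_add_two_of_even a b w0 w1 hn.add_one - w_add_two_of_odd a b w0 w1 hn

theorem W_add_four (n : ℕ) :
    W a b w0 w1 (n + 4) = (a * b + 2) • W a b w0 w1 (n + 2) - W a b w0 w1 n := by
  simp only [W, Finset.smul_sum, ← Finset.sum_sub_distrib, smul_smul, ← sub_smul]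
  refine Finset.sum_congr rfl fun l _ => ?_
  rw [add_right_comm n 4, add_right_comm n 2, w_add_four]

theorem W_even_recurrence (n : ℕ) :
    W a b w0 w1 (2 * (n + 2)) =
      W a b w0 w1 (2 * (n + 1)) * ((a * b + 2 : ℝ) : Quaternion ℝ) + W a b w0 w1 (2 * n) * -1 := by
  rw [mul_neg_one, ← sub_eq_add_neg, Quaternion.mul_coe_eq_smul]
  exact W_add_four a b w0 w1 (2 * n)

end BiperiodicFibonacci

/-- Matrix representation of the even-indexed generalized bi-periodic Fibonacci
quaternions. The entries `ab+2`, `1`, `-1`, `0` are regarded as real quaternions. -/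
theorem stmt8 (a b w0 w1 : ℝ) (ha : a ≠ 0) (hb : b ≠ 0) (n : ℕ) (hn : 1 ≤ n) :
    (!![W a b w0 w1 (2 * n), W a b w0 w1 (2 * (n - 1));
        W a b w0 w1 (2 * (n + 1)), W a b w0 w1 (2 * n)] :
          Matrix (Fin 2) (Fin 2) (Quaternion ℝ)) =
      !![W a b w0 w1 2, W a b w0 w1 0; W a b w0 w1 4, W a b w0 w1 2] *
        (!![((a * b + 2 : ℝ) : Quaternion ℝ), 1; -1, 0]) ^ (n - 1) := by
  obtain ⟨m, rfl⟩ := Nat.exists_eq_add_of_le' hn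
  rw [Nat.add_sub_cancel]
  exact matrix_fin_two_eq_mul_companion_pow
    (u := fun k => W a b w0 w1 (2 * k)) (v := fun k => W a b w0 w1 (2 * (k + 1)))
    (W_even_recurrence a b w0 w1) (fun k => W_even_recurrence a b w0 w1 (k + 1)) m
end

section
/- For every natural number n, the norm of the generalized bi-periodic Fibonacci quaternion satisfies Nr(W_n) = w_n² + w_{n+1}² + w_{n+2}² + w_{n+3}² = T(n) + T(n+1), where T(n) = (a^{2ζ(n+1)} / ((ab)^{n−ζ(n)}·(αβ)²·(α−β)²))·(w_1²·X + 2·w_0·w_1·b·Y + w_0²·b²·Z), with X = α^{2n}(α⁴ + (αβ)²) + β^{2n}(β⁴ + (αβ)²) − 4(αβ)^{n+2}, Y = α^{2n-1}(α⁴ + (αβ)²) + β^{2n-1}(β⁴ + (αβ)²) + 2(αβ)^{n+2}, and Z = α^{2n-2}(α⁴ + (αβ)²) + β^{2n-2}(β⁴ + (αβ)²) − 4(αβ)^{n+1}. -/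
/-- The quantity `T(n)` in the norm formula for the generalized bi-periodic
Fibonacci quaternions. Here `ζ(n) = n % 2` is the parity function and the powers
`α^{2n}, α^{2n-1}, α^{2n-2}` (and similarly for `β`) are integer powers. -/
noncomputable def T (a b w0 w1 α β : ℝ) (n : ℕ) : ℝ :=
  a ^ (2 * ((n + 1) % 2)) /
      ((a * b) ^ (n - n % 2) * (α * β) ^ 2 * (α - β) ^ 2) *
    (w1 ^ 2 *
        (α ^ (2 * (n : ℤ)) * (α ^ 4 + (α * β) ^ 2) +
          β ^ (2 * (n : ℤ)) * (β ^ 4 + (α * β) ^ 2) - 4 * (α * β) ^ (n + 2)) +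
      2 * w0 * w1 * b *
        (α ^ (2 * (n : ℤ) - 1) * (α ^ 4 + (α * β) ^ 2) +
          β ^ (2 * (n : ℤ) - 1) * (β ^ 4 + (α * β) ^ 2) + 2 * (α * β) ^ (n + 2)) +
      w0 ^ 2 * b ^ 2 *
        (α ^ (2 * (n : ℤ) - 2) * (α ^ 4 + (α * β) ^ 2) +
          β ^ (2 * (n : ℤ) - 2) * (β ^ 4 + (α * β) ^ 2) - 4 * (α * β) ^ (n + 1)))

/-!
As `α + β = ab` and `αβ = -ab`, both `α` and `β` are roots of `x² = ab (x + 1)`, which gives the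
Binet formula `w_n = c_n (A αⁿ - B βⁿ) / (α - β)` with `c_n = a^ζ(n+1) / (ab)^⌊n/2⌋`,
`A = w_1 + b w_0 / α` and `B = w_1 + b w_0 / β`. Since `c_{n+2}² = c_n² / (αβ)²`, the sum
`w_n² + w_{n+2}²` is `c_n² / ((αβ)² (α - β)²)` times
`A² α²ⁿ (α⁴ + (αβ)²) + B² β²ⁿ (β⁴ + (αβ)²) - 4 A B (αβ)ⁿ⁺²`.
Expanding `A²`, `B²` and `A B = w_1² - b w_0 w_1 + b² w_0² / (αβ)` turns this into `T(n)`, so that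
`T(n) + T(n+1)` collects the four squares of `Nr(W_n)`.
-/

section Field

variable {K : Type*} [Field K]

/-- The factor `a^ζ(n+1) / (ab)^⌊n/2⌋` of the Binet formula for bi-periodic Fibonacci sequences,
which absorbs the alternation between `a` and `b`; the parity `ζ` is encoded as `· % 2`. -/
def binetCoeff (a b : K) (n : ℕ) : K :=
  a ^ ((n + 1) % 2) / (a * b) ^ (n / 2)

/-- The combination `(u + v / α) αⁿ - (u + v / β) βⁿ` of powers in the Binet formula, where `u` and
`v` stand for `w_1` and `b w_0`. Dividing `v` by the roots avoids the negative exponent of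
`αⁿ⁻¹` at `n = 0`. -/
def binetNumerator (u v α β : K) (n : ℕ) : K :=
  (u + v / α) * α ^ n - (u + v / β) * β ^ n

lemma binetCoeff_add_two (a b : K) (n : ℕ) :
    binetCoeff a b (n + 2) = binetCoeff a b n / (a * b) := by
  have hmod : (n + 2 + 1) % 2 = (n + 1) % 2 := by lia
  have hdiv : (n + 2) / 2 = n / 2 + 1 := by lia
  rw [binetCoeff, binetCoeff, hmod, hdiv, pow_succ, div_div]

lemma ite_even_mul_binetCoeff_succ {a b : K} (ha : a ≠ 0) (hb : b ≠ 0) (n : ℕ) :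
    (if Even n then a else b) * binetCoeff a b (n + 1) = binetCoeff a b n := by
  unfold binetCoeff
  obtain ⟨m, rfl | rfl⟩ := n.even_or_odd'
  · have hmod : (2 * m + 1 + 1) % 2 = 0 := by lia
    have hdiv : (2 * m + 1) / 2 = m := by lia
    simp [hmod, hdiv, div_eq_mul_inv]
  · have hodd : ¬Even (2 * m + 1) := by simp
    have hmod : (2 * m + 1 + 1 + 1) % 2 = 1 := by lia
    have hmod' : (2 * m + 1 + 1) % 2 = 0 := by lia
    have hdiv : (2 * m + 1 + 1) / 2 = m + 1 := by lia
    have hdiv' : (2 * m + 1) / 2 = m := by lia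
    rw [if_neg hodd, hmod, hmod', hdiv, hdiv', pow_succ (a * b)]
    field_simp

lemma binetCoeff_sq (a b : K) (n : ℕ) :
    binetCoeff a b n ^ 2 = a ^ (2 * ((n + 1) % 2)) / (a * b) ^ (n - n % 2) := by
  have hsub : n - n % 2 = n / 2 * 2 := by lia
  rw [binetCoeff, div_pow, hsub, pow_mul (a * b), pow_mul' a]

lemma binetNumerator_zero (u v : K) {α β : K} (hα : α ≠ 0) (hβ : β ≠ 0) :
    binetNumerator u v α β 0 = -(v * (α - β)) / (α * β) := by
  rw [binetNumerator]
  field_simp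
  ring

lemma binetNumerator_one (u v : K) {α β : K} (hα : α ≠ 0) (hβ : β ≠ 0) :
    binetNumerator u v α β 1 = u * (α - β) := by
  rw [binetNumerator]
  field_simp
  ring

lemma binetNumerator_add_two (u v : K) {c α β : K}
    (hα : α ^ 2 = c * (α + 1)) (hβ : β ^ 2 = c * (β + 1)) (n : ℕ) :
    binetNumerator u v α β (n + 2) =
      c * (binetNumerator u v α β (n + 1) + binetNumerator u v α β n) := by
  simp only [binetNumerator, pow_add _ n 2, hα, hβ]
  ring

lemma sq_add_div_mul_pow (u v : K) {x : K} (hx : x ≠ 0) (n : ℕ) :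
    ((u + v / x) * x ^ n) ^ 2 =
      u ^ 2 * x ^ (2 * (n : ℤ)) + 2 * u * v * x ^ (2 * (n : ℤ) - 1) +
        v ^ 2 * x ^ (2 * (n : ℤ) - 2) := by
  have hpow : x ^ (2 * (n : ℤ)) = (x ^ n) ^ 2 := by
    rw [mul_comm, zpow_mul, zpow_natCast, zpow_ofNat]
  rw [zpow_sub_one₀ hx, zpow_sub₀ hx, hpow, zpow_ofNat]
  field_simp
  ring

lemma add_div_mul_add_div_mul_mul_pow (u v : K) {α β : K} (hα : α ≠ 0) (hβ : β ≠ 0)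
    (hsum : α + β = -(α * β)) (n : ℕ) :
    (u + v / α) * (u + v / β) * (α * β) ^ (n + 2) =
      u ^ 2 * (α * β) ^ (n + 2) - u * v * (α * β) ^ (n + 2) + v ^ 2 * (α * β) ^ (n + 1) := by
  have hprod : (u + v / α) * (u + v / β) * (α * β) = (u ^ 2 - u * v) * (α * β) + v ^ 2 := by
    field_simp
    linear_combination u * v * hsum
  linear_combination (α * β) ^ (n + 1) * hprod

lemma sq_mul_binetNumerator_sq_add_binetNumerator_sq (u v α β : K) (n : ℕ) :
    (α * β) ^ 2 * binetNumerator u v α β n ^ 2 + binetNumerator u v α β (n + 2) ^ 2 =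
      ((u + v / α) * α ^ n) ^ 2 * (α ^ 4 + (α * β) ^ 2) +
        ((u + v / β) * β ^ n) ^ 2 * (β ^ 4 + (α * β) ^ 2) -
          4 * ((u + v / α) * (u + v / β) * (α * β) ^ (n + 2)) := by
  simp only [binetNumerator]
  ring

end Field

section Real

variable {a b α β : ℝ}

lemma w_eq_binet_s12 (w0 w1 : ℝ) (ha : a ≠ 0) (hb : b ≠ 0) (hsum : α + β = a * b)
    (hprod : α * β = -(a * b)) (hne : α ≠ β) (n : ℕ) :
    w a b w0 w1 n = binetCoeff a b n * binetNumerator w1 (b * w0) α β n / (α - β) := by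
  have hαβ : α * β ≠ 0 := hprod ▸ neg_ne_zero.mpr (mul_ne_zero ha hb)
  have hα := left_ne_zero_of_mul hαβ
  have hβ := right_ne_zero_of_mul hαβ
  have hsub : α - β ≠ 0 := sub_ne_zero.mpr hne
  induction n using Nat.twoStepInduction with
  | zero =>
    rw [w, binetNumerator_zero _ _ hα hβ, hprod]
    simp only [binetCoeff]
    field_simp
    simp
  | one =>
    rw [w, binetNumerator_one _ _ hα hβ]
    simp [binetCoeff, hsub]
  | more n ih ih_succ =>
    have hα_root : α ^ 2 = a * b * (α + 1) := by linear_combination α * hsum - hprod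
    have hβ_root : β ^ 2 = a * b * (β + 1) := by linear_combination β * hsum - hprod
    have hcoeff : (if Even (n + 2) then a else b) * binetCoeff a b (n + 1) = binetCoeff a b n := by
      simpa [Nat.even_add] using ite_even_mul_binetCoeff_succ ha hb n
    rw [w, ih, ih_succ, binetCoeff_add_two, binetNumerator_add_two _ _ hα_root hβ_root,
      mul_div_assoc _ _ (α - β), ← mul_assoc, hcoeff]
    field_simp

lemma T_eq_sq_add_sq (w0 w1 : ℝ) (ha : a ≠ 0) (hb : b ≠ 0) (hsum : α + β = a * b)
    (hprod : α * β = -(a * b)) (hne : α ≠ β) (n : ℕ) :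
    T a b w0 w1 α β n = w a b w0 w1 n ^ 2 + w a b w0 w1 (n + 2) ^ 2 := by
  have hαβ : α * β ≠ 0 := hprod ▸ neg_ne_zero.mpr (mul_ne_zero ha hb)
  have hα := left_ne_zero_of_mul hαβ
  have hβ := right_ne_zero_of_mul hαβ
  have hab : a * b = -(α * β) := by rw [hprod, neg_neg]
  have hsub : α - β ≠ 0 := sub_ne_zero.mpr hne
  calc
    T a b w0 w1 α β n = binetCoeff a b n ^ 2 / ((α * β) ^ 2 * (α - β) ^ 2) *
        ((α * β) ^ 2 * binetNumerator w1 (b * w0) α β n ^ 2 +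
          binetNumerator w1 (b * w0) α β (n + 2) ^ 2) := by
      rw [sq_mul_binetNumerator_sq_add_binetNumerator_sq, sq_add_div_mul_pow _ _ hα,
        sq_add_div_mul_pow _ _ hβ,
        add_div_mul_add_div_mul_mul_pow _ _ hα hβ (hsum.trans hab), binetCoeff_sq, div_div,
        ← mul_assoc, T]
      ring
    _ = w a b w0 w1 n ^ 2 + w a b w0 w1 (n + 2) ^ 2 := by
      rw [w_eq_binet_s12 w0 w1 ha hb hsum hprod hne n, w_eq_binet_s12 w0 w1 ha hb hsum hprod hne (n + 2),
        binetCoeff_add_two, hab]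
      field_simp

end Real

section Quaternion

lemma re_e : (e 0).re = 1 ∧ (e 1).re = 0 ∧ (e 2).re = 0 ∧ (e 3).re = 0 := ⟨rfl, rfl, rfl, rfl⟩

lemma imI_e : (e 0).imI = 0 ∧ (e 1).imI = 1 ∧ (e 2).imI = 0 ∧ (e 3).imI = 0 :=
  ⟨rfl, rfl, rfl, rfl⟩

lemma imJ_e : (e 0).imJ = 0 ∧ (e 1).imJ = 0 ∧ (e 2).imJ = 1 ∧ (e 3).imJ = 0 :=
  ⟨rfl, rfl, rfl, rfl⟩

lemma imK_e : (e 0).imK = 0 ∧ (e 1).imK = 0 ∧ (e 2).imK = 0 ∧ (e 3).imK = 1 :=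
  ⟨rfl, rfl, rfl, rfl⟩

lemma normSq_sum_range_four_smul_e (f : ℕ → ℝ) :
    Quaternion.normSq (∑ l ∈ Finset.range 4, f l • e l) = ∑ l ∈ Finset.range 4, f l ^ 2 := by
  simp [Quaternion.normSq_def', Finset.sum_range_succ, re_e, imI_e, imJ_e, imK_e]

lemma normSq_W (a b w0 w1 : ℝ) (n : ℕ) :
    Quaternion.normSq (W a b w0 w1 n) =
      w a b w0 w1 n ^ 2 + w a b w0 w1 (n + 1) ^ 2 + w a b w0 w1 (n + 2) ^ 2 +
        w a b w0 w1 (n + 3) ^ 2 := by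
  rw [W, normSq_sum_range_four_smul_e]
  simp only [Finset.sum_range_succ, Finset.sum_range_zero, zero_add, add_zero]

end Quaternion

/-- The norm `Nr(W_n) = W_n · conj(W_n)` of the generalized bi-periodic Fibonacci
quaternion equals `w_n² + w_{n+1}² + w_{n+2}² + w_{n+3}²`, which equals `T(n) + T(n+1)`. -/
theorem stmt12 (a b w0 w1 α β : ℝ)
    (ha : a ≠ 0) (hb : b ≠ 0) (hD : a ^ 2 * b ^ 2 + 4 * (a * b) > 0)
    (hα : α = (a * b + Real.sqrt (a ^ 2 * b ^ 2 + 4 * (a * b))) / 2)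
    (hβ : β = (a * b - Real.sqrt (a ^ 2 * b ^ 2 + 4 * (a * b))) / 2)
    (n : ℕ) :
    W a b w0 w1 n * star (W a b w0 w1 n) =
        ((w a b w0 w1 n ^ 2 + w a b w0 w1 (n + 1) ^ 2 + w a b w0 w1 (n + 2) ^ 2 +
            w a b w0 w1 (n + 3) ^ 2 : ℝ) : Quaternion ℝ) ∧
      w a b w0 w1 n ^ 2 + w a b w0 w1 (n + 1) ^ 2 + w a b w0 w1 (n + 2) ^ 2 +
          w a b w0 w1 (n + 3) ^ 2 =
        T a b w0 w1 α β n + T a b w0 w1 α β (n + 1) := by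
  have hsq := Real.sq_sqrt hD.le
  have hsum : α + β = a * b := by rw [hα, hβ]; ring
  have hprod : α * β = -(a * b) := by rw [hα, hβ]; linear_combination (-1 / 4) * hsq
  have hlt : β < α := by linarith [Real.sqrt_pos.mpr hD]
  refine ⟨by rw [Quaternion.self_mul_star, normSq_W], ?_⟩
  rw [T_eq_sq_add_sq w0 w1 ha hb hsum hprod hlt.ne' n,
    T_eq_sq_add_sq w0 w1 ha hb hsum hprod hlt.ne' (n + 1)]
  ring
end
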